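/- Let α be a type and let A and B be palindromic lists over α. Then for every n ≥ 2 and every i with 1 ≤ i ≤ 2^{n−1}, setting k = 6·2^{n−2} + i and m = 6·2^{n−2} − i + 1, one has S_{A,B}(k) = reverse( S_{B,A}(m) ), where S_{B,A} denotes the family defined by the same recursion with the roles of A and B interchanged. -/

import Mathlib

/-- Stern's diatomic sequence. -/
def stern : ℕ → ℕ
  | 0 => 0
  | 1 => 1
  | n + 2 =>
    if (n + 2) % 2 = 0 then stern ((n + 2) / 2)
    else stern ((n + 2) / 2) + stern ((n + 2) / 2 + 1)
decreasing_by all_goals omega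

/-- OEIS A003602: a(1)=1, a(2n)=a(n), a(2n+1)=n+1. (a(0)=0 as junk value.) -/
def aseq : ℕ → ℕ
  | 0 => 0
  | 1 => 1
  | n + 2 =>
    if (n + 2) % 2 = 0 then aseq ((n + 2) / 2)
    else (n + 2) / 2 + 1
decreasing_by all_goals omega

-- the modified sequence `a*`: zero at powers of two.
open Classical in
noncomputable def aStar (j : ℕ) : ℕ :=
  if ∃ k, j = 2 ^ k then 0 else aseq j

theorem aseq_le (n : ℕ) : aseq n ≤ n := by
  induction n using Nat.strong_induction_on with
  | _ n ih =>
    match n with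
    | 0 => simp [aseq]
    | 1 => simp [aseq]
    | m + 2 =>
      rw [aseq]
      split
      · exact le_trans (ih ((m + 2) / 2) (by omega)) (by omega)
      · omega

theorem aStar_le (j : ℕ) : aStar j ≤ j := by
  unfold aStar
  split
  · omega
  · exact aseq_le j

/-- The Markov-type sequence `S_{A,B}(n)`. -/
noncomputable def mseq {α : Type*} (A B : List α) : ℕ → List α
  | 0 => A
  | 1 => B
  | 2 => A ++ B
  | n + 3 =>
    if (n + 3) % 2 = 0 then
      mseq A B ((n + 3) / 2) ++ mseq A B (aseq ((n + 3) / 2))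
    else
      mseq A B (aStar ((n + 4) / 2 - 1)) ++ mseq A B ((n + 4) / 2)
decreasing_by
  all_goals first
    | omega
    | exact lt_of_le_of_lt (aseq_le _) (by omega)
    | exact lt_of_le_of_lt (aStar_le _) (by omega)

/-!
The indices `p` and `q = 3 * 2 ^ n + 1 - p` are mirror images in the block `(2 ^ n, 2 ^ (n + 1)]`.
Of a mirror pair at level `n + 1` one index is `2 * s` and the other `2 * t + 1`, and the recursion
gives `S(2s) = S(s) ⊕ S(a(s))` and `S(2t + 1) = S(a*(t)) ⊕ S(t + 1)`. Here `(s, t + 1)` is a mirror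
pair at level `n`, and `(a(s), a(t))` is one at a lower level, except when `s = 2 ^ (n + 1)`,
`t = 2 ^ n`, where `a(s) = 1` and `a*(t) = 0` index the two initial lists. Thus reversal exchanges
the two halves of the recursion, and the symmetry follows by induction on `n`. For arbitrary `A` and
`B` it relates `S_{A,B}` to the family started from `reverse B` and `reverse A`.
-/

theorem aseq_two_mul (n : ℕ) : aseq (2 * n) = aseq n := by
  rcases n with _ | n
  · rfl
  · rw [show 2 * (n + 1) = 2 * n + 2 by ring, aseq, if_pos (by lia),
      show (2 * n + 2) / 2 = n + 1 by lia]

theorem aseq_two_mul_add_one (n : ℕ) : aseq (2 * n + 1) = n + 1 := by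
  rcases n with _ | n
  · rw [aseq]
  · rw [show 2 * (n + 1) + 1 = (2 * n + 1) + 2 by ring, aseq, if_neg (by lia)]
    lia

theorem aseq_two_pow (n : ℕ) : aseq (2 ^ n) = 1 := by
  induction n with
  | zero => rw [pow_zero, aseq]
  | succ n ih => rw [pow_succ', aseq_two_mul, ih]

theorem aStar_two_pow (n : ℕ) : aStar (2 ^ n) = 0 :=
  if_pos ⟨n, rfl⟩

theorem aStar_eq_aseq_of_lt_of_lt {n q : ℕ} (hlt : 2 ^ n < q) (hgt : q < 2 ^ (n + 1)) :
    aStar q = aseq q := by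
  refine if_neg ?_
  rintro ⟨k, rfl⟩
  rw [Nat.pow_lt_pow_iff_right one_lt_two] at hlt hgt
  lia

section Recursion

variable {α : Type*} (A B : List α)

theorem mseq_two_mul {j : ℕ} (hj : 2 ≤ j) :
    mseq A B (2 * j) = mseq A B j ++ mseq A B (aseq j) := by
  obtain ⟨t, rfl⟩ := Nat.exists_eq_add_of_le' hj
  rw [show 2 * (t + 2) = (2 * t + 1) + 3 by ring, mseq, if_pos (by lia),
    show (2 * t + 1 + 3) / 2 = t + 2 by lia]

theorem mseq_two_mul_add_one {j : ℕ} (hj : 1 ≤ j) :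
    mseq A B (2 * j + 1) = mseq A B (aStar j) ++ mseq A B (j + 1) := by
  obtain ⟨t, rfl⟩ := Nat.exists_eq_add_of_le' hj
  rw [show 2 * (t + 1) + 1 = 2 * t + 3 by ring, mseq, if_neg (by lia),
    show (2 * t + 4) / 2 = t + 2 by lia, Nat.add_sub_cancel (t + 1) 1]

end Recursion

/-- `p` and `q` are mirror images of each other in the dyadic block `(2 ^ n, 2 ^ (n + 1)]`; the
lower bounds `2 ^ n < p` and `2 ^ n < q` follow from the sum and the upper bounds. -/
structure IsMirrorPair (n p q : ℕ) : Prop where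
  add_eq : p + q = 3 * 2 ^ n + 1
  left_le : p ≤ 2 ^ (n + 1)
  right_le : q ≤ 2 ^ (n + 1)

namespace IsMirrorPair

variable {n p q s t : ℕ}

theorem symm (h : IsMirrorPair n p q) : IsMirrorPair n q p :=
  ⟨by rw [add_comm, h.add_eq], h.right_le, h.left_le⟩

theorem lt_left (h : IsMirrorPair n p q) : 2 ^ n < p := by
  have := h.add_eq
  have := h.right_le
  lia

theorem lt_right (h : IsMirrorPair n p q) : 2 ^ n < q :=
  h.symm.lt_left

theorem half (h : IsMirrorPair (n + 1) (2 * s) (2 * t + 1)) : IsMirrorPair n s (t + 1) := by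
  obtain ⟨hadd, hleft, hright⟩ := h
  rw [pow_succ] at hadd hleft hright
  constructor <;> lia

theorem exists_aseq (h : IsMirrorPair n p (q + 1)) (hp : p < 2 ^ (n + 1)) :
    ∃ m < n, IsMirrorPair m (aseq p) (aseq q) := by
  induction n generalizing p q with
  | zero =>
    have := h.lt_left
    lia
  | succ n ih =>
    have hadd := h.add_eq
    have hright := h.right_le
    rw [pow_succ] at hadd hp hright
    obtain ⟨s, rfl | rfl⟩ := Nat.even_or_odd' p
    · obtain ⟨t, rfl⟩ : ∃ t, q = 2 * t := ⟨q / 2, by lia⟩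
      obtain ⟨m, hm, hmirror⟩ := ih h.half (by lia)
      rw [aseq_two_mul, aseq_two_mul]
      exact ⟨m, hm.trans n.lt_succ_self, hmirror⟩
    · obtain ⟨t, rfl⟩ : ∃ t, q = 2 * t + 1 := ⟨q / 2, by lia⟩
      rw [aseq_two_mul_add_one, aseq_two_mul_add_one]
      exact ⟨n, n.lt_succ_self, by lia, by lia, by lia⟩

section Reversal

variable {α : Type*} {A B : List α}

theorem mseq_aseq_eq_reverse
    (ih : ∀ m < n, ∀ p q, IsMirrorPair m p q →
      mseq A B p = (mseq B.reverse A.reverse q).reverse)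
    (h : IsMirrorPair n p (q + 1)) :
    mseq A B (aseq p) = (mseq B.reverse A.reverse (aStar q)).reverse := by
  have hadd := h.add_eq
  rcases h.left_le.eq_or_lt with rfl | hp
  · obtain rfl : q = 2 ^ n := by lia
    rw [aseq_two_pow, aStar_two_pow, mseq, mseq, List.reverse_reverse]
  · obtain ⟨m, hm, hmirror⟩ := h.exists_aseq hp
    rw [aStar_eq_aseq_of_lt_of_lt (n := n) (by lia) h.right_le]
    exact ih m hm _ _ hmirror

theorem mseq_two_mul_eq_reverse
    (ih : ∀ m < n + 1, ∀ p q, IsMirrorPair m p q →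
      mseq A B p = (mseq B.reverse A.reverse q).reverse)
    (h : IsMirrorPair (n + 1) (2 * s) (2 * t + 1)) :
    mseq A B (2 * s) = (mseq B.reverse A.reverse (2 * t + 1)).reverse := by
  have hpos : 0 < 2 ^ n := Nat.two_pow_pos n
  have hs : 2 ≤ s := lt_of_le_of_lt hpos h.half.lt_left
  have ht : 1 ≤ t := lt_of_lt_of_le hpos (Nat.le_of_lt_succ h.half.lt_right)
  calc mseq A B (2 * s)
      = mseq A B s ++ mseq A B (aseq s) := mseq_two_mul A B hs
    _ = (mseq B.reverse A.reverse (t + 1)).reverse ++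
          (mseq B.reverse A.reverse (aStar t)).reverse := by
      rw [ih n n.lt_succ_self _ _ h.half,
        h.half.mseq_aseq_eq_reverse fun m hm => ih m (hm.trans n.lt_succ_self)]
    _ = (mseq B.reverse A.reverse (2 * t + 1)).reverse := by
      rw [mseq_two_mul_add_one _ _ ht, List.reverse_append]

theorem mseq_eq_reverse (h : IsMirrorPair n p q) :
    mseq A B p = (mseq B.reverse A.reverse q).reverse := by
  induction n using Nat.strong_induction_on generalizing A B p q with
  | _ n ih =>
    have hadd := h.add_eq
    rcases n with _ | n
    · obtain rfl : p = 2 := le_antisymm h.left_le h.lt_left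
      obtain rfl : q = 2 := le_antisymm h.right_le h.lt_right
      rw [mseq, mseq, List.reverse_append, List.reverse_reverse, List.reverse_reverse]
    · rw [pow_succ] at hadd
      obtain ⟨s, rfl | rfl⟩ := Nat.even_or_odd' p
      · obtain ⟨t, rfl⟩ : ∃ t, q = 2 * t + 1 := ⟨q / 2, by lia⟩
        exact h.mseq_two_mul_eq_reverse fun m hm _ _ => ih m hm
      · obtain ⟨t, rfl⟩ : ∃ t, q = 2 * t := ⟨q / 2, by lia⟩
        have hswap := h.symm.mseq_two_mul_eq_reverse (A := B.reverse) (B := A.reverse)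
          fun m hm _ _ => ih m hm
        rw [hswap, List.reverse_reverse, List.reverse_reverse, List.reverse_reverse]

end Reversal

end IsMirrorPair

theorem stmt17_general {α : Type*} (A B : List α) {n i : ℕ} (hi1 : 1 ≤ i) (hi2 : i ≤ 2 ^ n) :
    mseq A B (3 * 2 ^ n + i) = (mseq B.reverse A.reverse (3 * 2 ^ n - i + 1)).reverse := by
  refine IsMirrorPair.mseq_eq_reverse (n := n + 1) ⟨?_, ?_, ?_⟩ <;> lia

/-- for palindromic `A`, `B`, every `n ≥ 2` and `1 ≤ i ≤ 2^{n−1}`, with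
`k = 6·2^{n−2} + i` and `m = 6·2^{n−2} − i + 1`, one has
`S_{A,B}(k) = reverse (S_{B,A}(m))`. -/
theorem stmt17 {α : Type*} (A B : List α) (hA : A.reverse = A) (hB : B.reverse = B)
    (n i : ℕ) (hn : 2 ≤ n) (hi1 : 1 ≤ i) (hi2 : i ≤ 2 ^ (n - 1)) :
    mseq A B (6 * 2 ^ (n - 2) + i) = (mseq B A (6 * 2 ^ (n - 2) - i + 1)).reverse := by
  have hpow : 3 * 2 ^ (n - 1) = 6 * 2 ^ (n - 2) := by
    rw [show n - 1 = n - 2 + 1 by lia, pow_succ]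
    ring
  simpa only [hA, hB, hpow] using stmt17_general A B hi1 hi2
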